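/- For every N ≥ 3 and every 1 ≤ n < N, there is no strongly n-supercyclic operator on ℝ^N. In particular, there exist n-supercyclic operators on ℝ^N that are not strongly n-supercyclic (e.g., any rotation on ℝ³ about a line with rotation angle θ such that {θ, π} is ℚ-linearly independent is 2-supercyclic but not strongly 2-supercyclic). -/

import Mathlib

/-!
Write `n`-dimensional subspaces of `ℝ^N` as row spaces of `n × N` matrices `v`, so that `T` acts by
`v ↦ v * B` with `B` the transposed matrix of `T`. An `N × n` complex matrix `Ψ` with
`B * Ψ = Ψ * U` gives a Plücker coordinate `pl Ψ v = det (v * Ψ)` which is multiplied by `det U`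
under `T`. A strongly supercyclic subspace makes the orbit of some `v₀` dense (`DenseOrb`), and the
proof contradicts this by exhibiting a non-constant ratio of such coordinates whose values along the
orbit have countable closure.

Namely (`core`), if `P` and `Q` are polynomial in `v`, homogeneous of the same weight under `GL_n`,
and `P / Q` takes on the orbit values in a set with countable closure, then `P / Q` takes all its
values in that closure, so by connectedness it is locally constant on real matrices; as a polynomial
identity this extends to all complex matrices, `P = c * Q`. Sequences `ρ ^ k * a` with `ρ ≥ 0` and
`a + k * β` have countable closure: they converge or tend to infinity. Since `B` must be invertible
(`det_ne_zero_of_denseOrb`), there are two cases.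

* All complex eigenvalues are distinct (`not_denseOrb_of_diagonal`). Every `n`-set of eigenvectors
  gives some `Ψ`, and `P = pl Ψ₂ * pl (conj Ψ₂)`, `Q = pl Ψ₁ * pl (conj Ψ₁)` have a ratio that is
  multiplied by a nonnegative real number at each step, so `P = c * Q` on complex matrices. As
  `N.choose n ≥ 3`, the sets can be chosen so that some functional `z` annihilated by `Ψ₂` is
  annihilated neither by `Ψ₁` nor by its conjugate. A matrix with row `z` then forces `c = 0`,
  which is absurd (`not_denseOrb_of_two`).
* Some eigenvalue is repeated (`not_denseOrb_of_repeated`). In a triangular form in which it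
  occupies the consecutive places `m = n - 1` and `m + 1`, the coordinates with columns `0, …, m`
  and `0, …, m - 1, m + 1` have a ratio that is translated by a constant at each step, so they would
  be proportional, which they are not.

For the second assertion, the rotation of `ℝ³` by one radian is `2`-supercyclic: any plane
containing the axis meets every circle about the axis, and the orbit of a point is dense in its circle.
-/

open Matrix

/-- The `n`-th Grassmannian of a topological real vector space `X`, i.e. the set of
`n`-dimensional subspaces, carries the quotient topology coinduced by the span map
from linearly independent `n`-tuples. -/
noncomputable instance grassTopology (X : Type*) [AddCommGroup X] [Module ℝ X]
    [TopologicalSpace X] (n : ℕ) :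
    TopologicalSpace {M : Submodule ℝ X // Module.finrank ℝ M = n} :=
  TopologicalSpace.coinduced
    (fun v : {v : Fin n → X // LinearIndependent ℝ v} =>
      (⟨Submodule.span ℝ (Set.range v.1), by
        rw [finrank_span_eq_card v.2, Fintype.card_fin]⟩ :
        {M : Submodule ℝ X // Module.finrank ℝ M = n}))
    inferInstance

/-- `M` is a strongly `n`-supercyclic subspace for `T`: it is `n`-dimensional, all its
iterates `T^k(M)` are `n`-dimensional, and the orbit `{T^k(M) : k ∈ ℕ}` is dense in the
`n`-th Grassmannian. -/
def SCSubspace {X : Type*} [AddCommGroup X] [Module ℝ X] [TopologicalSpace X]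
    (n : ℕ) (T : X →ₗ[ℝ] X) (M : Submodule ℝ X) : Prop :=
  Module.finrank ℝ M = n ∧ (∀ k : ℕ, Module.finrank ℝ (M.map (T ^ k)) = n) ∧
    Dense {P : {M : Submodule ℝ X // Module.finrank ℝ M = n} |
      ∃ k : ℕ, (P : Submodule ℝ X) = M.map (T ^ k)}

/-- `T` is strongly `n`-supercyclic if it admits a strongly `n`-supercyclic subspace. -/
def StronglyNSupercyclic {X : Type*} [AddCommGroup X] [Module ℝ X] [TopologicalSpace X]
    (n : ℕ) (T : X →ₗ[ℝ] X) : Prop :=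
  ∃ M : Submodule ℝ X, SCSubspace n T M

/-- A linear operator `T` on `ι → ℝ` is `n`-supercyclic if there is an `n`-dimensional
subspace `E` whose orbit `⋃ k, T^k(E)` is dense. -/
def NSupercyclic {ι : Type*} [Fintype ι] (n : ℕ) (T : (ι → ℝ) →ₗ[ℝ] (ι → ℝ)) : Prop :=
  ∃ E : Submodule ℝ (ι → ℝ), Module.finrank ℝ E = n ∧
    Dense (⋃ k : ℕ, ⇑(T ^ k) '' (E : Set (ι → ℝ)))

/-! ### Functions holomorphic along complex lines -/

/-- Holomorphic along every complex line; this needs no norm on the space of matrices. -/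
def LineEntire {m k : ℕ} (P : Matrix (Fin m) (Fin k) ℂ → ℂ) : Prop :=
  ∀ a b, Differentiable ℂ fun t : ℂ => P (a + t • b)

/-- An entire function vanishing on a real neighbourhood of `0` vanishes identically. -/
lemma entire_zero_of_real {f : ℂ → ℂ} (hf : Differentiable ℂ f)
    (h : ∀ᶠ t : ℝ in nhds 0, f t = 0) (z : ℂ) : f z = 0 := by
  have ha : AnalyticOnNhd ℂ f Set.univ := hf.differentiableOn.analyticOnNhd isOpen_univ
  refine ha.eqOn_zero_of_preconnected_of_frequently_eq_zero isPreconnected_univ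
    (z₀ := 0) trivial ?_ (Set.mem_univ z)
  have ht : Filter.Tendsto (fun t : ℝ => (t : ℂ)) (nhdsWithin 0 {0}ᶜ) (nhdsWithin 0 {0}ᶜ) := by
    refine tendsto_nhdsWithin_iff.2 ⟨?_, ?_⟩
    · have : Filter.Tendsto (fun t : ℝ => (t : ℂ)) (nhds 0) (nhds ((0 : ℝ) : ℂ)) :=
        Complex.continuous_ofReal.tendsto 0
      simpa using this.mono_left nhdsWithin_le_nhds
    · filter_upwards [self_mem_nhdsWithin] with t ht
      simpa using ht
  exact ht.frequently (Filter.Eventually.frequently (h.filter_mono nhdsWithin_le_nhds))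

namespace LineEntire
variable {m k : ℕ} {P Q : Matrix (Fin m) (Fin k) ℂ → ℂ}

lemma mul (hP : LineEntire P) (hQ : LineEntire Q) : LineEntire (fun Z => P Z * Q Z) :=
  fun a b => (hP a b).mul (hQ a b)

lemma sub_const_mul (hP : LineEntire P) (hQ : LineEntire Q) (c : ℂ) :
    LineEntire (fun Z => P Z - c * Q Z) :=
  fun a b => (hP a b).sub ((hQ a b).const_mul c)

/-- Two nonzero line-entire functions are simultaneously nonzero somewhere on the complex line
through their respective nonzero points. -/
lemma exists_ne_zero (hP : LineEntire P) (hQ : LineEntire Q) {a b : Matrix (Fin m) (Fin k) ℂ}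
    (ha : P a ≠ 0) (hb : Q b ≠ 0) :
    ∃ t : ℂ, P (a + t • (b - a)) ≠ 0 ∧ Q (a + t • (b - a)) ≠ 0 := by
  by_contra! h
  have h1 := (hP a (b - a)).differentiableOn.analyticOnNhd isOpen_univ
  have h2 := (hQ a (b - a)).differentiableOn.analyticOnNhd isOpen_univ
  rcases AnalyticOnNhd.eq_zero_or_eq_zero_of_mul_eq_zero h1 h2 (fun z _ => by
    by_cases hz : P (a + z • (b - a)) = 0
    · simp [hz]
    · simp [h z hz]) isPreconnected_univ with h0 | h0
  · exact ha (by simpa using h0 0 trivial)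
  · exact hb (by simpa using h0 1 trivial)

/-- A line-entire function vanishing on short real segments issuing from one real point vanishes
identically: first at all real points, then along `x + t y` at `t = i`. -/
lemma eq_zero (hP : LineEntire P) (v : Matrix (Fin m) (Fin k) ℝ)
    (h : ∀ w : Matrix (Fin m) (Fin k) ℝ, ∀ᶠ t : ℝ in nhds 0,
      P ((v + t • w).map Complex.ofReal) = 0) (Z : Matrix (Fin m) (Fin k) ℂ) : P Z = 0 := by
  have hreal : ∀ x : Matrix (Fin m) (Fin k) ℝ, P (x.map Complex.ofReal) = 0 := by
    intro x
    have := entire_zero_of_real (hP (v.map Complex.ofReal) ((x - v).map Complex.ofReal))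
      ((h (x - v)).mono fun t ht => by
        rw [← ht]; congr 1; ext i j; simp) 1
    rw [← this]; congr 1; ext i j; simp
  have := entire_zero_of_real (hP ((Z.map Complex.re).map Complex.ofReal)
    ((Z.map Complex.im).map Complex.ofReal))
      (Filter.Eventually.of_forall fun t => by
        rw [← hreal (Z.map Complex.re + t • Z.map Complex.im)]; congr 1; ext i j; simp)
        Complex.I
  rw [← this]; congr 1; ext i j; simp [mul_comm Complex.I, Complex.re_add_im]

end LineEntire

/-! ### Plücker coordinates -/

/-- The Plücker coordinate of the row space of `Z` attached to the `n`-dimensional space of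
functionals spanned by the columns of `Ψ`. -/
noncomputable def pl {N n : ℕ} (Ψ : Matrix (Fin N) (Fin n) ℂ) (Z : Matrix (Fin n) (Fin N) ℂ) : ℂ :=
  (Z * Ψ).det

section pl
variable {N n : ℕ} (Ψ : Matrix (Fin N) (Fin n) ℂ)

lemma pl_lineEntire : LineEntire (pl Ψ) := by
  intro a b
  simp only [pl, Matrix.det_apply, Matrix.mul_apply, Matrix.add_apply, Matrix.smul_apply]
  fun_prop

lemma pl_continuous : Continuous (pl Ψ) := by
  unfold pl
  fun_prop

lemma pl_mul_left (g : Matrix (Fin n) (Fin n) ℂ) (Z) : pl Ψ (g * Z) = g.det * pl Ψ Z := by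
  simp [pl, Matrix.mul_assoc]

lemma pl_mul_right {B : Matrix (Fin N) (Fin N) ℂ} {U : Matrix (Fin n) (Fin n) ℂ}
    (h : B * Ψ = Ψ * U) (Z) : pl Ψ (Z * B) = U.det * pl Ψ Z := by
  rw [pl, Matrix.mul_assoc, h, ← Matrix.mul_assoc, Matrix.det_mul, mul_comm, pl]

lemma pl_mul_pow {B : Matrix (Fin N) (Fin N) ℂ} {U : Matrix (Fin n) (Fin n) ℂ}
    (h : B * Ψ = Ψ * U) (Z) (k : ℕ) : pl Ψ (Z * B ^ k) = U.det ^ k * pl Ψ Z := by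
  induction k with
  | zero => simp
  | succ k ih => rw [pow_succ, ← Matrix.mul_assoc, pl_mul_right Ψ h, ih]; ring

/-- A real matrix with a nonzero Plücker coordinate has full row rank. -/
lemma linearIndependent_of_pl {v : Matrix (Fin n) (Fin N) ℝ}
    (h : pl Ψ (v.map Complex.ofReal) ≠ 0) : LinearIndependent ℝ v.row := by
  rw [← Matrix.vecMul_injective_iff]
  refine (injective_iff_map_eq_zero v.vecMulLinear).2 fun g hg => ?_
  by_contra hne
  refine h (Matrix.exists_vecMul_eq_zero_iff.1 ⟨fun i => (g i : ℂ), ?_, ?_⟩)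
  · intro h0
    exact hne (funext fun i => by simpa using congrFun h0 i)
  · rw [← Matrix.vecMul_vecMul]
    have : (fun i => (g i : ℂ)) ᵥ* v.map Complex.ofReal = 0 := by
      funext j
      have := congrArg Complex.ofReal (congrFun hg j)
      simpa [Matrix.vecMul, dotProduct] using this
    rw [this, Matrix.zero_vecMul]

end pl

/-! ### Dense orbits and rigidity of ratios -/

/-- The orbit of the row space of `v₀` under `v ↦ v * B` meets every nonempty open set of
subspaces; such sets are encoded as open `GL`-invariant sets of matrices of row vectors. -/
def DenseOrb {N n : ℕ} (B : Matrix (Fin N) (Fin N) ℝ) (v₀ : Matrix (Fin n) (Fin N) ℝ) : Prop :=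
  ∀ O : Set (Matrix (Fin n) (Fin N) ℝ), IsOpen O →
    (∀ (g : Matrix (Fin n) (Fin n) ℝ) (v), g.det ≠ 0 → v ∈ O → g * v ∈ O) →
    (∃ v ∈ O, LinearIndependent ℝ v.row) → ∃ k : ℕ, v₀ * B ^ k ∈ O

/-- Rigidity: if two functions `P`, `Q` of the same weight under `GL_n` have a ratio `u k` along a
dense orbit and the set of values of `u` has countable closure, then `P` and `Q` are proportional
on all complex matrices. -/
lemma core {N n : ℕ} {B : Matrix (Fin N) (Fin N) ℝ} {v₀ : Matrix (Fin n) (Fin N) ℝ}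
    (hD : DenseOrb B v₀) {P Q : Matrix (Fin n) (Fin N) ℂ → ℂ}
    (hPc : Continuous P) (hQc : Continuous Q) (hP : LineEntire P) (hQ : LineEntire Q)
    (hom : ∀ g : Matrix (Fin n) (Fin n) ℝ, g.det ≠ 0 → ∃ χ : ℂ, χ ≠ 0 ∧ ∀ Z,
      P (g.map Complex.ofReal * Z) = χ * P Z ∧ Q (g.map Complex.ofReal * Z) = χ * Q Z)
    (hLI : ∀ v : Matrix (Fin n) (Fin N) ℝ, Q (v.map Complex.ofReal) ≠ 0 →
      LinearIndependent ℝ v.row)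
    (hne : ∃ Z, Q Z ≠ 0) (u : ℕ → ℂ) (hu : (closure (Set.range u)).Countable)
    (hPQ : ∀ k, P ((v₀ * B ^ k).map Complex.ofReal) = u k * Q ((v₀ * B ^ k).map Complex.ofReal)) :
    ∃ c, ∀ Z, P Z = c * Q Z := by
  set R : Matrix (Fin n) (Fin N) ℝ → Matrix (Fin n) (Fin N) ℂ := fun v => v.map Complex.ofReal
    with hR
  have hRc : Continuous R := by
    rw [hR]; exact continuous_id.matrix_map Complex.continuous_ofReal
  have hRmul : ∀ (g : Matrix (Fin n) (Fin n) ℝ) v, R (g * v) = g.map Complex.ofReal * R v := by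
    intro g v; exact Matrix.map_mul (f := Complex.ofRealHom)
  have hO : IsOpen {v | Q (R v) ≠ 0} := isOpen_ne_fun (hQc.comp hRc) continuous_const
  have hr : ContinuousOn (fun v => P (R v) / Q (R v)) {v | Q (R v) ≠ 0} :=
    (hPc.comp hRc).continuousOn.div (hQc.comp hRc).continuousOn fun v hv => hv
  -- by density the ratio takes values in the countable closure of its values on the orbit
  have hmem : ∀ v, Q (R v) ≠ 0 → P (R v) / Q (R v) ∈ closure (Set.range u) := by
    intro v hv
    rw [mem_closure_iff]
    intro V hV hvV
    obtain ⟨k, hk1, hk2⟩ := hD ({v | Q (R v) ≠ 0} ∩ (fun v => P (R v) / Q (R v)) ⁻¹' V)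
      (hr.isOpen_inter_preimage hO hV) (by
        rintro g w hg ⟨hw1, hw2⟩
        obtain ⟨χ, hχ, h⟩ := hom g hg
        obtain ⟨h1, h2⟩ := h (R w)
        have hw1' : Q (R w) ≠ 0 := hw1
        refine ⟨?_, ?_⟩
        · change Q (R (g * w)) ≠ 0
          rw [hRmul, h2]; exact mul_ne_zero hχ hw1
        · change P (R (g * w)) / Q (R (g * w)) ∈ V
          rw [hRmul, h1, h2, mul_div_mul_left _ _ hχ]; exact hw2)
      ⟨v, ⟨hv, hvV⟩, hLI v hv⟩
    refine ⟨u k, ?_, k, rfl⟩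
    have hk1' : Q (R (v₀ * B ^ k)) ≠ 0 := hk1
    have : P (R (v₀ * B ^ k)) / Q (R (v₀ * B ^ k)) = u k := by
      rw [div_eq_iff hk1']; exact hPQ k
    rw [← this]; exact hk2
  -- a real point with `Q ≠ 0`
  obtain ⟨v, hv⟩ : ∃ v, Q (R v) ≠ 0 := by
    by_contra! h
    obtain ⟨Z, hZ⟩ := hne
    exact hZ (hQ.eq_zero 0 (fun w => Filter.Eventually.of_forall fun t => h _) Z)
  refine ⟨P (R v) / Q (R v), fun Z => sub_eq_zero.1 ?_⟩
  refine (hP.sub_const_mul hQ (P (R v) / Q (R v))).eq_zero v (fun w => ?_) Z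
  have hcont : Continuous fun t : ℝ => v + t • w := by fun_prop
  have hmem0 : {t : ℝ | Q (R (v + t • w)) ≠ 0} ∈ nhds (0 : ℝ) :=
    (hO.preimage hcont).mem_nhds (by simpa using hv)
  obtain ⟨ε, hε, hball⟩ := Metric.mem_nhds_iff.1 hmem0
  filter_upwards [Metric.ball_mem_nhds (0 : ℝ) hε] with t ht
  -- the ratio is continuous on an interval with values in a countable set, hence constant
  have hpre : IsPreconnected ((fun t : ℝ => P (R (v + t • w)) / Q (R (v + t • w))) ''
      Metric.ball (0 : ℝ) ε) :=
    (convex_ball (0 : ℝ) ε).isPreconnected.image _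
      (hr.comp hcont.continuousOn fun s hs => hball hs)
  have hsub := hu.isTotallyDisconnected _ (by
    rintro _ ⟨s, hs, rfl⟩
    exact hmem _ (hball hs)) hpre
  have heq := hsub ⟨t, ht, rfl⟩ ⟨0, Metric.mem_ball_self hε, rfl⟩
  have hQt : Q (R (v + t • w)) ≠ 0 := hball ht
  simp only [zero_smul, add_zero] at heq
  change P (R (v + t • w)) - P (R v) / Q (R v) * Q (R (v + t • w)) = 0
  rw [← heq, div_mul_cancel₀ _ hQt, sub_self]

/-! ### Sequences with countable closure -/

lemma countable_closure_of_tendsto {u : ℕ → ℂ} {L : ℂ}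
    (h : Filter.Tendsto u Filter.atTop (nhds L)) : (closure (Set.range u)).Countable :=
  ((Set.countable_range u).insert L).mono
    (closure_minimal (Set.subset_insert _ _) h.isCompact_insert_range.isClosed)

lemma countable_closure_of_norm {u : ℕ → ℂ}
    (h : Filter.Tendsto (fun k => ‖u k‖) Filter.atTop Filter.atTop) :
    (closure (Set.range u)).Countable := by
  have h1 : Filter.Tendsto u Filter.atTop (Filter.cocompact ℂ) := by
    rw [← Metric.cobounded_eq_cocompact, ← comap_norm_atTop]; exact Filter.tendsto_comap_iff.2 h
  have h2 : IsProperMap u := isProperMap_iff_tendsto_cocompact.2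
    ⟨continuous_of_discreteTopology, by
      rwa [Filter.cocompact_eq_cofinite, Nat.cofinite_eq_atTop]⟩
  rw [h2.isClosedMap.isClosed_range.closure_eq]
  exact Set.countable_range u

lemma countable_closure_geom (a : ℂ) {ρ : ℝ} (hρ : 0 ≤ ρ) :
    (closure (Set.range fun k : ℕ => (ρ : ℂ) ^ k * a)).Countable := by
  by_cases ha : a = 0
  · exact countable_closure_of_tendsto (L := 0) (by simp [ha])
  rcases lt_trichotomy ρ 1 with h | h | h
  · refine countable_closure_of_tendsto (L := 0) ?_
    have : Filter.Tendsto (fun k : ℕ => (ρ : ℂ) ^ k) Filter.atTop (nhds 0) :=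
      tendsto_pow_atTop_nhds_zero_of_norm_lt_one (by simpa [abs_of_nonneg hρ] using h)
    simpa using this.mul_const a
  · exact countable_closure_of_tendsto (L := a) (by simp [h])
  · refine countable_closure_of_norm ?_
    have := (tendsto_pow_atTop_atTop_of_one_lt h).atTop_mul_const (norm_pos_iff.2 ha)
    simpa [abs_of_nonneg hρ] using this

lemma countable_closure_arith (a β : ℂ) :
    (closure (Set.range fun k : ℕ => a + k * β)).Countable := by
  by_cases hb : β = 0
  · exact countable_closure_of_tendsto (L := a) (by simp [hb])
  refine countable_closure_of_norm ?_
  have h1 : Filter.Tendsto (fun k : ℕ => (k : ℝ) * ‖β‖ + -‖a‖) Filter.atTop Filter.atTop :=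
    Filter.tendsto_atTop_add_const_right _ _
      (tendsto_natCast_atTop_atTop.atTop_mul_const (norm_pos_iff.2 hb))
  refine Filter.tendsto_atTop_mono (fun k => ?_) h1
  have := norm_sub_le (a + k * β) a
  simp only [add_sub_cancel_left, norm_mul, Complex.norm_natCast] at this
  linarith

/-! ### From strongly supercyclic subspaces to dense orbits -/

/-- Density in the quotient topology of the Grassmannian translates into `DenseOrb` because open
sets of subspaces correspond to open `GL`-invariant sets of matrices. -/
lemma denseOrb_of_SCSubspace {N n : ℕ} {T : (Fin N → ℝ) →ₗ[ℝ] (Fin N → ℝ)}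
    {M : Submodule ℝ (Fin N → ℝ)} (h : SCSubspace n T M) :
    ∃ v₀ : Matrix (Fin n) (Fin N) ℝ, DenseOrb (LinearMap.toMatrix' T)ᵀ v₀ := by
  obtain ⟨h1, h2, h3⟩ := h
  let b := Module.finBasisOfFinrankEq ℝ M h1
  let v₀ : Matrix (Fin n) (Fin N) ℝ := fun i => (b i : Fin N → ℝ)
  have hspan : Submodule.span ℝ (Set.range v₀) = M := by
    have := congrArg (Submodule.map M.subtype) b.span_eq
    rw [Submodule.map_span, ← Set.range_comp, Submodule.map_subtype_top] at this
    exact this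
  have hrow : ∀ k i, (v₀ * (LinearMap.toMatrix' T)ᵀ ^ k) i = (T ^ k) (v₀ i) := by
    intro k i
    have hpow : LinearMap.toMatrix' T ^ k = LinearMap.toMatrix' (T ^ k) :=
      (map_pow LinearMap.toMatrixAlgEquiv' T k).symm
    rw [← Matrix.transpose_pow, hpow]
    rw [← LinearMap.toMatrix'_mulVec (T ^ k) (v₀ i)]
    ext j
    simp only [Matrix.mul_apply, Matrix.mulVec, dotProduct, Matrix.transpose_apply, mul_comm]
  have hspank : ∀ k, Submodule.span ℝ (Set.range (v₀ * (LinearMap.toMatrix' T)ᵀ ^ k).row)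
      = M.map (T ^ k) := by
    intro k
    rw [← hspan, Submodule.map_span, ← Set.range_comp]
    congr 2
    funext i
    exact hrow k i
  refine ⟨v₀, fun O hO hinv ⟨w, hwO, hw⟩ => ?_⟩
  let U : Set {P : Submodule ℝ (Fin N → ℝ) // Module.finrank ℝ P = n} :=
    {P | ∃ v ∈ O, LinearIndependent ℝ v.row ∧ Submodule.span ℝ (Set.range v.row) = P}
  have key : ∀ v v' : Matrix (Fin n) (Fin N) ℝ, v ∈ O → LinearIndependent ℝ v'.row →
      Submodule.span ℝ (Set.range v.row) = Submodule.span ℝ (Set.range v'.row) → v' ∈ O := by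
    intro v v' hv hv' hs
    have : ∀ i, ∃ c : Fin n → ℝ, ∑ j, c j • v.row j = v'.row i := fun i =>
      (Submodule.mem_span_range_iff_exists_fun ℝ).1 (hs ▸ Submodule.subset_span ⟨i, rfl⟩)
    choose g hg using this
    have hgv : v' = (Matrix.of g) * v := by
      ext i j
      have := congrFun (hg i) j
      simp only [Finset.sum_apply, Pi.smul_apply, smul_eq_mul, Matrix.row] at this
      rw [← this, Matrix.mul_apply]; rfl
    rw [hgv]
    refine hinv _ _ (fun hdet => ?_) hv
    obtain ⟨c, hc, hc0⟩ := Matrix.exists_vecMul_eq_zero_iff.2 hdet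
    rw [← Matrix.vecMul_injective_iff] at hv'
    apply hc
    apply hv'
    change c ᵥ* v' = 0 ᵥ* v'
    rw [hgv, ← Matrix.vecMul_vecMul, hc0, Matrix.zero_vecMul, Matrix.zero_vecMul]
  have hU : IsOpen U := by
    change IsOpen ((fun v : {v : Fin n → Fin N → ℝ // LinearIndependent ℝ v} =>
      (⟨Submodule.span ℝ (Set.range v.1), by
        rw [finrank_span_eq_card v.2, Fintype.card_fin]⟩ :
        {M : Submodule ℝ (Fin N → ℝ) // Module.finrank ℝ M = n})) ⁻¹' U)
    have : (fun v : {v : Fin n → Fin N → ℝ // LinearIndependent ℝ v} =>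
      (⟨Submodule.span ℝ (Set.range v.1), by
        rw [finrank_span_eq_card v.2, Fintype.card_fin]⟩ :
        {M : Submodule ℝ (Fin N → ℝ) // Module.finrank ℝ M = n})) ⁻¹' U
        = Subtype.val ⁻¹' (O : Set (Fin n → Fin N → ℝ)) := by
      ext v
      constructor
      · rintro ⟨v', h1, h2, h3⟩
        exact key v' v.1 h1 v.2 h3
      · intro hv
        exact ⟨v.1, hv, v.2, rfl⟩
    rw [this]
    have hO' : IsOpen (X := Fin n → Fin N → ℝ) O := hO
    exact isOpen_induced hO'
  obtain ⟨P, ⟨v, hvO, hv, hvP⟩, k, hk⟩ := h3.inter_open_nonempty U hU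
    ⟨⟨Submodule.span ℝ (Set.range w.row), by
        rw [finrank_span_eq_card hw, Fintype.card_fin]⟩, w, hwO, hw, rfl⟩
  refine ⟨k, key v _ hvO ?_ (by rw [hvP, hk, hspank])⟩
  rw [linearIndependent_iff_card_eq_finrank_span, Set.finrank, hspank, h2, Fintype.card_fin]

/-- If `B` kills a column vector `l`, then so do all iterates `v₀ * B ^ k` with `k ≥ 1`, while `v₀`
itself kills some `h ≠ 0` since `n < N`. The orbit thus misses the open set of subspaces on which
neither `l` nor `h` vanishes. -/
lemma det_ne_zero_of_denseOrb {N n : ℕ} (hn : 1 ≤ n) (hnN : n < N)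
    {B : Matrix (Fin N) (Fin N) ℝ} {v₀ : Matrix (Fin n) (Fin N) ℝ} (hD : DenseOrb B v₀) :
    B.det ≠ 0 := by
  intro hdet
  obtain ⟨l, hl, hl0⟩ := Matrix.exists_mulVec_eq_zero_iff.2 hdet
  obtain ⟨h, hh, hh0⟩ : ∃ h : Fin N → ℝ, h ≠ 0 ∧ v₀ *ᵥ h = 0 := by
    have := LinearMap.ker_ne_bot_of_finrank_lt (f := v₀.mulVecLin) (by simpa using hnN)
    obtain ⟨h, h1, h2⟩ := (Submodule.ne_bot_iff _).1 this
    exact ⟨h, h2, h1⟩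
  obtain ⟨k, hk1, hk2⟩ := hD {v | v *ᵥ l ≠ 0 ∧ v *ᵥ h ≠ 0}
    ((isOpen_ne_fun (by fun_prop) continuous_const).inter
      (isOpen_ne_fun (by fun_prop) continuous_const)) (by
      rintro g v hg ⟨h1, h2⟩
      have : ∀ x : Fin N → ℝ, v *ᵥ x ≠ 0 → (g * v) *ᵥ x ≠ 0 := by
        intro x hx h0
        rw [← Matrix.mulVec_mulVec] at h0
        exact hg (Matrix.exists_mulVec_eq_zero_iff.1 ⟨_, hx, h0⟩)
      exact ⟨this l h1, this h h2⟩) (by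
      -- a row `x` on which `l` and `h` do not vanish, completed to `n` independent rows by applying an
      -- automorphism that sends the first basis vector to `x`
      obtain ⟨x, hxl, hxh⟩ : ∃ x : Fin N → ℝ, x ⬝ᵥ l ≠ 0 ∧ x ⬝ᵥ h ≠ 0 := by
        have e1 : ∀ y : Fin N → ℝ, y ≠ 0 → y ⬝ᵥ y ≠ 0 := fun y hy h0 =>
          hy (dotProduct_self_eq_zero.1 h0)
        by_cases c1 : l ⬝ᵥ h = 0
        · refine ⟨l + h, ?_, ?_⟩
          · rw [add_dotProduct, dotProduct_comm h l, c1, add_zero]; exact e1 l hl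
          · rw [add_dotProduct, c1, zero_add]; exact e1 h hh
        · exact ⟨l, e1 l hl, c1⟩
      have hx0 : x ≠ 0 := by rintro rfl; simp at hxl
      have hN0 : (Pi.single ⟨0, by omega⟩ 1 : Fin N → ℝ) ≠ 0 := by simp
      obtain ⟨e, he⟩ := SeparatingDual.exists_continuousLinearEquiv_apply_eq (R := ℝ) hN0 hx0
      refine ⟨Matrix.of fun i => e (Pi.single (Fin.castLE hnN.le i) 1),
        ⟨fun h0 => ?_, fun h0 => ?_⟩, ?_⟩
      · apply hxl
        rw [← he]; exact congrFun h0 ⟨0, hn⟩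
      · apply hxh
        rw [← he]; exact congrFun h0 ⟨0, hn⟩
      · have := (Pi.basisFun ℝ (Fin N)).linearIndependent.map' e.toLinearEquiv.toLinearMap
          (LinearEquiv.ker _)
        have := this.comp _ (Fin.castLE_injective hnN.le)
        have h2 : (Matrix.of fun i => e (Pi.single (Fin.castLE hnN.le i) 1)).row =
            (e.toLinearEquiv.toLinearMap ∘ ⇑(Pi.basisFun ℝ (Fin N))) ∘ Fin.castLE hnN.le := by
          funext i
          simp [Matrix.row]
          rfl
        rw [h2]; exact this)
  rcases k with _ | k
  · exact hk2 (by simpa using hh0)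
  · apply hk1
    rw [pow_succ, ← Matrix.mul_assoc, ← Matrix.mulVec_mulVec, hl0, Matrix.mulVec_zero]

/-! ### Two invariant spaces of functionals -/

/-- A nonzero homogeneous function cannot vanish along the whole dense orbit. -/
lemma exists_orbit_ne_zero {N n : ℕ} {B : Matrix (Fin N) (Fin N) ℝ} {v₀ : Matrix (Fin n) (Fin N) ℝ}
    (hD : DenseOrb B v₀) {Q : Matrix (Fin n) (Fin N) ℂ → ℂ}
    (hQc : Continuous Q) (hQ : LineEntire Q)
    (hom : ∀ g : Matrix (Fin n) (Fin n) ℝ, g.det ≠ 0 → ∃ χ : ℂ, χ ≠ 0 ∧ ∀ Z,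
      Q (g.map Complex.ofReal * Z) = χ * Q Z)
    (hLI : ∀ v : Matrix (Fin n) (Fin N) ℝ, Q (v.map Complex.ofReal) ≠ 0 →
      LinearIndependent ℝ v.row)
    (hne : ∃ Z, Q Z ≠ 0) : ∃ k, Q ((v₀ * B ^ k).map Complex.ofReal) ≠ 0 := by
  obtain ⟨v, hv⟩ : ∃ v : Matrix (Fin n) (Fin N) ℝ, Q (v.map Complex.ofReal) ≠ 0 := by
    by_contra! h
    obtain ⟨Z, hZ⟩ := hne
    exact hZ (hQ.eq_zero 0 (fun w => Filter.Eventually.of_forall fun t => h _) Z)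
  refine hD {v | Q (v.map Complex.ofReal) ≠ 0}
    (isOpen_ne_fun (hQc.comp (continuous_id.matrix_map Complex.continuous_ofReal))
      continuous_const) (fun g w hg hw => ?_) ⟨v, hv, hLI v hv⟩
  obtain ⟨χ, hχ, h⟩ := hom g hg
  have : (g * w).map Complex.ofReal = g.map Complex.ofReal * w.map Complex.ofReal :=
    Matrix.map_mul (f := Complex.ofRealHom)
  change Q ((g * w).map Complex.ofReal) ≠ 0
  rw [this, h]
  exact mul_ne_zero hχ hw

/-- A row `z` not annihilated by `Ψ` can be completed to a matrix with `pl Ψ Z ≠ 0`: the rows of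
`Z * Ψ` can be prescribed, thanks to the left inverse `L`. -/
lemma exists_pl_ne_zero {N n : ℕ} {Ψ : Matrix (Fin N) (Fin n) ℂ} {L : Matrix (Fin n) (Fin N) ℂ}
    (hL : L * Ψ = 1) (i₀ : Fin n) {z : Fin N → ℂ} (hz : z ᵥ* Ψ ≠ 0) :
    ∃ Z : Matrix (Fin n) (Fin N) ℂ, Z i₀ = z ∧ pl Ψ Z ≠ 0 := by
  have h1 : (Pi.single i₀ 1 : Fin n → ℂ) ≠ 0 := by simp
  obtain ⟨e, he⟩ := SeparatingDual.exists_continuousLinearEquiv_apply_eq (R := ℂ) h1 hz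
  let g : Matrix (Fin n) (Fin n) ℂ := Matrix.of fun i => e (Pi.single i 1)
  have hg : g.det ≠ 0 := by
    intro h0
    obtain ⟨c, hc, hc0⟩ := Matrix.exists_vecMul_eq_zero_iff.2 h0
    apply hc
    apply e.injective
    rw [map_zero, ← hc0, Matrix.vecMul_eq_sum]
    conv_lhs => rw [← Finset.univ_sum_single c]
    rw [map_sum]
    refine Finset.sum_congr rfl fun i _ => ?_
    change _ = c i • e (Pi.single i 1)
    rw [← map_smul, ← Pi.single_smul, smul_eq_mul, mul_one]
  refine ⟨(g * L).updateRow i₀ z, by simp, ?_⟩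
  rw [pl, Matrix.updateRow_mul, Matrix.mul_assoc, hL, Matrix.mul_one]
  have : g.updateRow i₀ (z ᵥ* Ψ) = g := by
    rw [← he]; exact Matrix.updateRow_eq_self g i₀
  rwa [this]

lemma map_ofReal_orbit {N n : ℕ} (B : Matrix (Fin N) (Fin N) ℝ) (v₀ : Matrix (Fin n) (Fin N) ℝ)
    (k : ℕ) : (v₀ * B ^ k).map Complex.ofReal
      = v₀.map Complex.ofReal * (B.map Complex.ofReal) ^ k := by
  have h1 : (v₀ * B ^ k).map Complex.ofReal = v₀.map Complex.ofReal * (B ^ k).map Complex.ofReal :=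
    Matrix.map_mul (f := Complex.ofRealHom)
  have h2 : (B ^ k).map Complex.ofReal = (B.map Complex.ofReal) ^ k :=
    Matrix.map_pow (f := Complex.ofRealHom) B k
  rw [h1, h2]

/-- Two `B`-invariant spaces of functionals, spanned by the columns of `Ψ₁` and `Ψ₂`, with
annihilators such that `ann Ψ₂` is contained neither in `ann Ψ₁` nor in its conjugate,
exclude a dense orbit: the squared modulus of the ratio of the two Plücker coordinates is multiplied
by a constant along the orbit, hence would have to be constant on the Grassmannian. -/
lemma not_denseOrb_of_two {N n : ℕ} (hn : 1 ≤ n) {B : Matrix (Fin N) (Fin N) ℝ}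
    {v₀ : Matrix (Fin n) (Fin N) ℝ} (hD : DenseOrb B v₀)
    {Ψ₁ Ψ₂ : Matrix (Fin N) (Fin n) ℂ} {L₁ L₂ : Matrix (Fin n) (Fin N) ℂ}
    (hL₁ : L₁ * Ψ₁ = 1) (hL₂ : L₂ * Ψ₂ = 1) {U₁ U₂ : Matrix (Fin n) (Fin n) ℂ}
    (h₁ : B.map Complex.ofReal * Ψ₁ = Ψ₁ * U₁) (h₂ : B.map Complex.ofReal * Ψ₂ = Ψ₂ * U₂)
    (hU₁ : U₁.det ≠ 0) {z : Fin N → ℂ} (hz₂ : z ᵥ* Ψ₂ = 0) (hz₁ : z ᵥ* Ψ₁ ≠ 0)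
    (hz₁' : z ᵥ* Ψ₁.map (starRingEnd ℂ) ≠ 0) : False := by
  have conjL : ∀ {Ψ : Matrix (Fin N) (Fin n) ℂ} {L : Matrix (Fin n) (Fin N) ℂ}, L * Ψ = 1 →
      L.map (starRingEnd ℂ) * Ψ.map (starRingEnd ℂ) = 1 := by
    intro Ψ L h
    rw [← Matrix.map_mul, h]
    exact Matrix.map_one _ (map_zero _) (map_one _)
  have conjB : ∀ {Ψ : Matrix (Fin N) (Fin n) ℂ} {U : Matrix (Fin n) (Fin n) ℂ},
      B.map Complex.ofReal * Ψ = Ψ * U →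
      B.map Complex.ofReal * Ψ.map (starRingEnd ℂ)
        = Ψ.map (starRingEnd ℂ) * U.map (starRingEnd ℂ) := by
    intro Ψ U h
    rw [← Matrix.map_mul, ← h, Matrix.map_mul]
    congr 1
    ext i j; simp
  have det_conj : ∀ U : Matrix (Fin n) (Fin n) ℂ,
      (U.map (starRingEnd ℂ)).det = starRingEnd ℂ U.det := fun U =>
    ((starRingEnd ℂ).map_det U).symm
  -- on real matrices `F Ψ` is the squared modulus of `pl Ψ`, and it is polynomial on complex ones
  let F : Matrix (Fin N) (Fin n) ℂ → Matrix (Fin n) (Fin N) ℂ → ℂ := fun Ψ Z =>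
    pl Ψ Z * pl (Ψ.map (starRingEnd ℂ)) Z
  have hFc : ∀ Ψ, Continuous (F Ψ) := fun Ψ => (pl_continuous _).mul (pl_continuous _)
  have hFe : ∀ Ψ, LineEntire (F Ψ) := fun Ψ => (pl_lineEntire _).mul (pl_lineEntire _)
  have hom : ∀ g : Matrix (Fin n) (Fin n) ℝ, g.det ≠ 0 → ∃ χ : ℂ, χ ≠ 0 ∧ ∀ Ψ Z,
      F Ψ (g.map Complex.ofReal * Z) = χ * F Ψ Z := by
    intro g hg
    have hdet : (g.map Complex.ofReal).det = (g.det : ℂ) := (Complex.ofRealHom.map_det g).symm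
    have : (g.det : ℂ) ≠ 0 := by exact_mod_cast hg
    refine ⟨(g.det : ℂ) * g.det, mul_ne_zero this this, fun Ψ Z => ?_⟩
    simp only [F, pl_mul_left, hdet]
    ring
  have hLI : ∀ Ψ (v : Matrix (Fin n) (Fin N) ℝ), F Ψ (v.map Complex.ofReal) ≠ 0 →
      LinearIndependent ℝ v.row := fun Ψ v h => linearIndependent_of_pl Ψ (left_ne_zero_of_mul h)
  have hne : ∀ {Ψ : Matrix (Fin N) (Fin n) ℂ} {L : Matrix (Fin n) (Fin N) ℂ}, L * Ψ = 1 →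
      ∃ Z, F Ψ Z ≠ 0 := by
    intro Ψ L h
    obtain ⟨t, h1, h2⟩ := (pl_lineEntire Ψ).exists_ne_zero (pl_lineEntire (Ψ.map (starRingEnd ℂ)))
      (a := L) (b := L.map (starRingEnd ℂ)) (by simp [pl, h]) (by simp [pl, conjL h])
    exact ⟨_, mul_ne_zero h1 h2⟩
  have horb : ∀ {Ψ : Matrix (Fin N) (Fin n) ℂ} {U : Matrix (Fin n) (Fin n) ℂ},
      B.map Complex.ofReal * Ψ = Ψ * U → ∀ k, F Ψ ((v₀ * B ^ k).map Complex.ofReal)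
        = ((Complex.normSq U.det : ℝ) : ℂ) ^ k * F Ψ (v₀.map Complex.ofReal) := by
    intro Ψ U h k
    simp only [F, map_ofReal_orbit]
    rw [pl_mul_pow _ h, pl_mul_pow _ (conjB h), det_conj, ← Complex.mul_conj, mul_pow]
    ring
  have hQ0 : F Ψ₁ (v₀.map Complex.ofReal) ≠ 0 := by
    obtain ⟨k, hk⟩ := exists_orbit_ne_zero hD (hFc Ψ₁) (hFe Ψ₁) (fun g hg => by
      obtain ⟨χ, hχ, h⟩ := hom g hg
      exact ⟨χ, hχ, h Ψ₁⟩) (hLI Ψ₁) (hne hL₁)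
    rw [horb h₁] at hk
    exact right_ne_zero_of_mul hk
  obtain ⟨c, hc⟩ := core hD (hFc Ψ₂) (hFc Ψ₁) (hFe Ψ₂) (hFe Ψ₁) (fun g hg => by
      obtain ⟨χ, hχ, h⟩ := hom g hg
      exact ⟨χ, hχ, fun Z => ⟨h Ψ₂ Z, h Ψ₁ Z⟩⟩) (hLI Ψ₁) (hne hL₁)
    (fun k => ((Complex.normSq U₂.det / Complex.normSq U₁.det : ℝ) : ℂ) ^ k *
      (F Ψ₂ (v₀.map Complex.ofReal) / F Ψ₁ (v₀.map Complex.ofReal)))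
    (countable_closure_geom _ (div_nonneg (Complex.normSq_nonneg _) (Complex.normSq_nonneg _)))
    (fun k => by
      have : (Complex.normSq U₁.det : ℂ) ≠ 0 := by
        exact_mod_cast (Complex.normSq_pos.2 hU₁).ne'
      rw [horb h₁, horb h₂]
      push_cast
      rw [div_pow]
      field_simp)
  -- a matrix with row `z`, so that `F Ψ₂` vanishes, at which `F Ψ₁` does not
  obtain ⟨Z₁, hZ₁, hp₁⟩ := exists_pl_ne_zero hL₁ ⟨0, hn⟩ hz₁
  obtain ⟨Z₂, hZ₂, hp₂⟩ := exists_pl_ne_zero (conjL hL₁) ⟨0, hn⟩ hz₁'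
  obtain ⟨t, ht₁, ht₂⟩ := (pl_lineEntire _).exists_ne_zero (pl_lineEntire _) hp₁ hp₂
  have hrow : (Z₁ + t • (Z₂ - Z₁)) ⟨0, hn⟩ = z := by
    funext j
    simp [Matrix.add_apply, Matrix.sub_apply, hZ₁, hZ₂]
  have hzero : pl Ψ₂ (Z₁ + t • (Z₂ - Z₁)) = 0 := by
    refine Matrix.det_eq_zero_of_row_eq_zero ⟨0, hn⟩ fun j => ?_
    rw [Matrix.mul_apply_eq_vecMul, hrow, hz₂]; rfl
  have hc0 : c = 0 := by
    have := hc (Z₁ + t • (Z₂ - Z₁))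
    simp only [F, hzero, zero_mul] at this
    exact (mul_eq_zero.1 this.symm).resolve_right (mul_ne_zero ht₁ ht₂)
  obtain ⟨Z, hZ⟩ := hne hL₂
  exact hZ (by rw [hc Z, hc0, zero_mul])

/-! ### Triangular and diagonal forms -/

/-- A complex matrix is conjugate to an upper triangular one with the roots of its characteristic
polynomial on the diagonal in any prescribed order. -/
lemma exists_triangular : ∀ (N : ℕ) (T : Matrix (Fin N) (Fin N) ℂ) (μ : Fin N → ℂ),
    T.charpoly = ∏ i, (Polynomial.X - Polynomial.C (μ i)) →
    ∃ S R U : Matrix (Fin N) (Fin N) ℂ, R * S = 1 ∧ T * S = S * U ∧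
      (∀ i j, j < i → U i j = 0) ∧ ∀ i, U i i = μ i := by
  intro N
  induction N with
  | zero =>
    intro T μ _
    exact ⟨1, 1, 0, by simp, Subsingleton.elim _ _, fun i => i.elim0, fun i => i.elim0⟩
  | succ N ih =>
    intro T μ h
    have hdet : (T - Matrix.scalar _ (μ 0)).det = 0 := by
      have h1 := Matrix.eval_charpoly T (μ 0)
      rw [h, Polynomial.eval_prod, Finset.prod_eq_zero (Finset.mem_univ 0) (by simp)] at h1
      rw [← neg_sub, Matrix.det_neg, ← h1, mul_zero]
    obtain ⟨v, hv, hv0⟩ := Matrix.exists_mulVec_eq_zero_iff.2 hdet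
    have hTv : T *ᵥ v = μ 0 • v := by
      rw [Matrix.sub_mulVec, sub_eq_zero] at hv0
      rw [hv0]; ext i; simp [Matrix.scalar_apply, Matrix.mulVec_diagonal]
    have h1 : (Pi.single 0 1 : Fin (N + 1) → ℂ) ≠ 0 := by simp
    obtain ⟨e, he⟩ := SeparatingDual.exists_continuousLinearEquiv_apply_eq (R := ℂ) h1 hv
    let P : Matrix (Fin (N + 1)) (Fin (N + 1)) ℂ := LinearMap.toMatrix' e.toLinearEquiv.toLinearMap
    let P' : Matrix (Fin (N + 1)) (Fin (N + 1)) ℂ :=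
      LinearMap.toMatrix' e.symm.toLinearEquiv.toLinearMap
    have hP'P : P' * P = 1 := by
      rw [← LinearMap.toMatrix'_mul, ← LinearMap.toMatrix'_one]
      congr 1; ext; simp
    have hPP' : P * P' = 1 := mul_eq_one_comm.1 hP'P
    have hPv : P *ᵥ Pi.single 0 1 = v := by
      rw [LinearMap.toMatrix'_mulVec]; exact he
    -- conjugate so that the first basis vector is an eigenvector, then recurse on the lower block
    set T₁ := P' * T * P with hT₁
    have hcol : ∀ i, T₁ i 0 = if i = 0 then μ 0 else 0 := by
      intro i
      have h2 : T₁ *ᵥ Pi.single 0 1 = μ 0 • Pi.single 0 1 := by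
        rw [hT₁, ← Matrix.mulVec_mulVec, ← Matrix.mulVec_mulVec, hPv, hTv, ← hPv,
          ← Matrix.mulVec_smul, Matrix.mulVec_mulVec, hP'P, Matrix.one_mulVec]
      have := congrFun h2 i
      simpa [Matrix.mulVec_single, Pi.single_apply] using this
    have hchar : T₁.charpoly = T.charpoly := by
      rw [hT₁, Matrix.charpoly_mul_comm, ← Matrix.mul_assoc, hPP', Matrix.one_mul]
    set T' := T₁.submatrix Fin.succ Fin.succ with hT'
    have hsplit : T₁.charpoly = (Polynomial.X - Polynomial.C (μ 0)) * T'.charpoly := by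
      rw [Matrix.charpoly, Matrix.det_succ_column_zero, Fin.sum_univ_succ]
      rw [Finset.sum_eq_zero (fun i _ => by
        simp [hcol, Fin.succ_ne_zero])]
      simp only [Fin.val_zero, pow_zero, one_mul, add_zero, Matrix.charmatrix_apply_eq, hcol,
        if_true]
      congr 2
      ext i j : 1
      simp [hT', Matrix.diagonal_apply, Matrix.charmatrix_apply]
    have hT'c : T'.charpoly = ∏ i : Fin N, (Polynomial.X - Polynomial.C (μ i.succ)) := by
      have := hsplit.symm.trans (hchar.trans h)
      rw [Fin.prod_univ_succ] at this
      exact mul_left_cancel₀ (Polynomial.X_sub_C_ne_zero _) this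
    obtain ⟨S', R', U', hRS, hTS, hU, hUd⟩ := ih T' (fun i => μ i.succ) hT'c
    let S₁ : Matrix (Fin (N + 1)) (Fin (N + 1)) ℂ :=
      Matrix.of (Fin.cons (Fin.cons 1 0) fun i => Fin.cons 0 (S' i))
    let R₁ : Matrix (Fin (N + 1)) (Fin (N + 1)) ℂ :=
      Matrix.of (Fin.cons (Fin.cons 1 0) fun i => Fin.cons 0 (R' i))
    let U : Matrix (Fin (N + 1)) (Fin (N + 1)) ℂ :=
      Matrix.of (Fin.cons (Fin.cons (μ 0) ((fun j => T₁ 0 j.succ) ᵥ* S')) fun i => Fin.cons 0 (U' i))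
    have hRS₁ : R₁ * S₁ = 1 := by
      ext i j
      have hh : ∀ i j, ∑ k, R' i k * S' k j = (1 : Matrix (Fin N) (Fin N) ℂ) i j := fun i j => by
        rw [← hRS, Matrix.mul_apply]
      refine Fin.cases ?_ (fun i => ?_) i <;> refine Fin.cases ?_ (fun j => ?_) j <;>
        simp [R₁, S₁, Matrix.mul_apply, Fin.sum_univ_succ, hh, Matrix.one_apply,
          Fin.succ_ne_zero, (Fin.succ_ne_zero _).symm]
    have hTS₁ : T₁ * S₁ = S₁ * U := by
      ext i j
      have hh : ∀ i j, ∑ k, T₁ (Fin.succ i) (Fin.succ k) * S' k j = ∑ k, S' i k * U' k j :=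
        fun i j => by
          have := congrFun (congrFun hTS i) j
          simpa [Matrix.mul_apply, hT'] using this
      refine Fin.cases ?_ (fun i => ?_) i <;> refine Fin.cases ?_ (fun j => ?_) j <;>
        simp [U, S₁, Matrix.mul_apply, Fin.sum_univ_succ, hh, hcol, Matrix.vecMul, dotProduct]
    refine ⟨P * S₁, R₁ * P', U, ?_, ?_, ?_, ?_⟩
    · rw [Matrix.mul_assoc, ← Matrix.mul_assoc P', hP'P, Matrix.one_mul, hRS₁]
    · rw [Matrix.mul_assoc P, ← hTS₁, hT₁]
      simp only [← Matrix.mul_assoc, hPP', Matrix.one_mul]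
    · intro i j hij
      revert hij
      refine Fin.cases ?_ (fun i => ?_) i <;> refine Fin.cases ?_ (fun j => ?_) j <;>
        simp [U]
      exact hU i j
    · intro i
      refine Fin.cases ?_ (fun i => ?_) i <;> simp [U, hUd]

/-- Diagonalization of a complex matrix with distinct eigenvalues. -/
lemma exists_diagonal {N : ℕ} (T : Matrix (Fin N) (Fin N) ℂ) (μ : Fin N → ℂ)
    (h : T.charpoly = ∏ i, (Polynomial.X - Polynomial.C (μ i))) (hμ : Function.Injective μ) :
    ∃ S R : Matrix (Fin N) (Fin N) ℂ, R * S = 1 ∧ T * S = S * Matrix.diagonal μ := by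
  have hev : ∀ i, ∃ v, v ≠ 0 ∧ T *ᵥ v = μ i • v := by
    intro i
    have hdet : (Matrix.scalar (Fin N) (μ i) - T).det = 0 := by
      rw [← Matrix.eval_charpoly, h, Polynomial.eval_prod]
      exact Finset.prod_eq_zero (Finset.mem_univ i) (by simp)
    obtain ⟨v, hv, hTv⟩ := Matrix.exists_mulVec_eq_zero_iff.2 hdet
    refine ⟨v, hv, ?_⟩
    rw [Matrix.sub_mulVec, sub_eq_zero] at hTv
    rw [← hTv]
    ext j
    simp [Matrix.scalar_apply, Matrix.mulVec_diagonal]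
  choose v hv hTv using hev
  have hli : LinearIndependent ℂ v := by
    refine Module.End.eigenvectors_linearIndependent' (Matrix.toLin' T) μ hμ v fun i => ?_
    rw [Module.End.hasEigenvector_iff, Module.End.mem_eigenspace_iff]
    exact ⟨by rw [Matrix.toLin'_apply, hTv], hv i⟩
  let S : Matrix (Fin N) (Fin N) ℂ := Matrix.of fun i j => v j i
  have hunit : IsUnit S := by
    rw [← Matrix.linearIndependent_cols_iff_isUnit]
    exact hli
  refine ⟨S, S⁻¹, Matrix.nonsing_inv_mul S ((Matrix.isUnit_iff_isUnit_det S).1 hunit), ?_⟩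
  ext i j
  rw [Matrix.mul_diagonal]
  have := congrFun (hTv j) i
  simpa [S, Matrix.mul_apply, Matrix.mulVec, dotProduct, mul_comm] using this

lemma exists_charpoly_eq_prod {N : ℕ} (T : Matrix (Fin N) (Fin N) ℂ) :
    ∃ μ : Fin N → ℂ, T.charpoly = ∏ i, (Polynomial.X - Polynomial.C (μ i)) := by
  have hs := IsAlgClosed.splits T.charpoly
  have hc : T.charpoly.roots.card = N := by
    rw [← hs.natDegree_eq_card_roots, Matrix.charpoly_natDegree_eq_dim, Fintype.card_fin]
  obtain ⟨l, hl⟩ := Quot.exists_rep T.charpoly.roots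
  have hlen : l.length = N := by rw [← hc, ← hl]; rfl
  subst hlen
  refine ⟨l.get, ?_⟩
  have h1 := hs.eq_prod_roots_of_monic T.charpoly_monic
  rw [← hl] at h1
  refine h1.trans ?_
  change (l.map fun a => Polynomial.X - Polynomial.C a).prod = _
  rw [← List.prod_ofFn]
  congr 1
  conv_lhs => rw [← List.ofFn_get l]
  rw [List.map_ofFn]
  rfl

/-! ### Repeated eigenvalues -/

/-- Effect on the two Plücker coordinates with column sets `{0,…,m}` and `{0,…,m-1,m+1}` of right
multiplication by an upper triangular matrix whose diagonal entries `m` and `m+1` agree. -/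
lemma det_two_columns {m : ℕ} (U : Matrix (Fin (m + 2)) (Fin (m + 2)) ℂ)
    (hU : ∀ i j, j < i → U i j = 0) (Y : Matrix (Fin (m + 1)) (Fin (m + 2)) ℂ)
    (hμ : U (Fin.last m).castSucc (Fin.last m).castSucc = U (Fin.last (m + 1)) (Fin.last (m + 1))) :
    ((Y * U).submatrix id Fin.castSucc).det
      = (∏ i : Fin m, U i.castSucc.castSucc i.castSucc.castSucc)
        * (U (Fin.last (m + 1)) (Fin.last (m + 1)) * (Y.submatrix id Fin.castSucc).det) ∧
    ((Y * U).submatrix id (Fin.last m).castSucc.succAbove).det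
      = (∏ i : Fin m, U i.castSucc.castSucc i.castSucc.castSucc)
        * (U (Fin.last (m + 1)) (Fin.last (m + 1))
            * (Y.submatrix id (Fin.last m).castSucc.succAbove).det
          + U (Fin.last m).castSucc (Fin.last (m + 1)) * (Y.submatrix id Fin.castSucc).det) := by
  have hlast : (Fin.last m).castSucc.succAbove (Fin.last m) = Fin.last (m + 1) := by
    simp [Fin.succAbove]
  have hcast : ∀ j : Fin m, (Fin.last m).castSucc.succAbove j.castSucc = j.castSucc.castSucc := by
    intro j
    simp [Fin.succAbove, Fin.castSucc_lt_last]
  have hz1 : ∀ j : Fin (m + 1), U (Fin.last (m + 1)) j.castSucc = 0 := fun j =>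
    hU _ _ (Fin.castSucc_lt_last j)
  have hz2 : ∀ j : Fin m, U (Fin.last m).castSucc j.castSucc.castSucc = 0 := fun j =>
    hU _ _ (by simp [Fin.castSucc_lt_last])
  constructor
  · have h1 : (Y * U).submatrix id Fin.castSucc
        = Y.submatrix id Fin.castSucc * U.submatrix Fin.castSucc Fin.castSucc := by
      ext i j
      simp only [Matrix.submatrix_apply, Matrix.mul_apply, id]
      rw [Fin.sum_univ_castSucc, hz1]
      simp
    rw [h1, Matrix.det_mul, Matrix.det_of_isUpperTriangular (M := U.submatrix _ _) (fun i j hij =>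
      hU _ _ (by simpa using hij)), Fin.prod_univ_castSucc]
    simp only [Matrix.submatrix_apply, hμ]
    ring
  · set c := U (Fin.last m).castSucc (Fin.last (m + 1)) with hc
    set μ := U (Fin.last (m + 1)) (Fin.last (m + 1)) with hμdef
    -- row `m` of `U` vanishes in the columns `< m`, so the minor factors as `X * V`: the last
    -- column of `X` collects the contributions of the rows `m` and `m + 1` of `U` to column `m + 1`
    let V : Matrix (Fin (m + 1)) (Fin (m + 1)) ℂ :=
      (U.submatrix Fin.castSucc Fin.castSucc).updateCol (Fin.last m)
        (Fin.lastCases 1 fun i => U i.castSucc.castSucc (Fin.last (m + 1)))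
    let X : Matrix (Fin (m + 1)) (Fin (m + 1)) ℂ :=
      (Y.submatrix id Fin.castSucc).updateCol (Fin.last m)
        (μ • (fun i => Y i (Fin.last (m + 1))) + c • fun i => Y i (Fin.last m).castSucc)
    have h1 : (Y * U).submatrix id (Fin.last m).castSucc.succAbove = X * V := by
      ext i j
      refine Fin.lastCases ?_ (fun j => ?_) j
      · simp only [Matrix.submatrix_apply, Matrix.mul_apply, id, hlast]
        rw [Fin.sum_univ_castSucc, Fin.sum_univ_castSucc, Fin.sum_univ_castSucc]
        simp [X, V, (Fin.castSucc_lt_last _).ne, ← hc, ← hμdef]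
        ring
      · simp only [Matrix.submatrix_apply, Matrix.mul_apply, id, hcast]
        rw [Fin.sum_univ_castSucc, Fin.sum_univ_castSucc, Fin.sum_univ_castSucc]
        simp [X, V, (Fin.castSucc_lt_last _).ne, hz1, hz2]
    have hV : V.det = ∏ i : Fin m, U i.castSucc.castSucc i.castSucc.castSucc := by
      rw [Matrix.det_of_isUpperTriangular (M := V), Fin.prod_univ_castSucc]
      · simp [V, (Fin.castSucc_lt_last _).ne]
      · intro i j hij
        have hij' : j < i := hij
        have : j ≠ Fin.last m := (lt_of_lt_of_le hij' (Fin.le_last i)).ne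
        simp only [V, Matrix.updateCol_apply, this, if_false, Matrix.submatrix_apply]
        exact hU _ _ (by simpa using hij')
    have hX : X.det = μ * (Y.submatrix id (Fin.last m).castSucc.succAbove).det
        + c * (Y.submatrix id Fin.castSucc).det := by
      rw [Matrix.det_updateCol_add, Matrix.det_updateCol_smul, Matrix.det_updateCol_smul]
      congr 3
      · ext i j
        refine Fin.lastCases ?_ (fun j => ?_) j
        · simp [hlast]
        · simp [hcast, (Fin.castSucc_lt_last _).ne]
      · ext i j
        refine Fin.lastCases ?_ (fun j => ?_) j
        · simp
        · simp [(Fin.castSucc_lt_last _).ne]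
    rw [h1, Matrix.det_mul, hV, hX]
    ring

/-- A repeated eigenvalue excludes a dense orbit: placed in consecutive positions `m`, `m+1` of a
triangular form, it makes the ratio of two Plücker coordinates undergo a translation. -/
lemma not_denseOrb_of_repeated {m q : ℕ} {B : Matrix (Fin (m + 2 + q)) (Fin (m + 2 + q)) ℝ}
    {v₀ : Matrix (Fin (m + 1)) (Fin (m + 2 + q)) ℝ} (hD : DenseOrb B v₀)
    {S R U : Matrix (Fin (m + 2 + q)) (Fin (m + 2 + q)) ℂ} (hRS : R * S = 1)
    (hBS : B.map Complex.ofReal * S = S * U) (hU : ∀ i j, j < i → U i j = 0)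
    (hne : ∀ i, U i i ≠ 0)
    (hμ : U (Fin.castAdd q (Fin.last m).castSucc) (Fin.castAdd q (Fin.last m).castSucc)
      = U (Fin.castAdd q (Fin.last (m + 1))) (Fin.castAdd q (Fin.last (m + 1)))) : False := by
  let α₀ : Fin (m + 1) → Fin (m + 2 + q) := fun j => Fin.castAdd q j.castSucc
  let α₁ : Fin (m + 1) → Fin (m + 2 + q) := fun j =>
    Fin.castAdd q ((Fin.last m).castSucc.succAbove j)
  let U₂ : Matrix (Fin (m + 2)) (Fin (m + 2)) ℂ := U.submatrix (Fin.castAdd q) (Fin.castAdd q)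
  set p := ∏ i : Fin m, U₂ i.castSucc.castSucc i.castSucc.castSucc with hp
  set μ := U₂ (Fin.last (m + 1)) (Fin.last (m + 1)) with hμdef
  set c := U₂ (Fin.last m).castSucc (Fin.last (m + 1)) with hc
  have hp0 : p ≠ 0 := Finset.prod_ne_zero_iff.2 fun i _ => hne _
  have hμ0 : μ ≠ 0 := hne _
  have hstep : ∀ Z : Matrix (Fin (m + 1)) (Fin (m + 2 + q)) ℂ,
      pl (S.submatrix id α₀) (Z * B.map Complex.ofReal)
        = p * (μ * pl (S.submatrix id α₀) Z) ∧
      pl (S.submatrix id α₁) (Z * B.map Complex.ofReal)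
        = p * (μ * pl (S.submatrix id α₁) Z + c * pl (S.submatrix id α₀) Z) := by
    intro Z
    have hmat : (Z * B.map Complex.ofReal * S).submatrix id (Fin.castAdd q)
        = (Z * S).submatrix id (Fin.castAdd q) * U₂ := by
      rw [Matrix.mul_assoc, hBS, ← Matrix.mul_assoc]
      ext i j
      rw [Matrix.submatrix_apply, Matrix.mul_apply, Matrix.mul_apply, Fin.sum_univ_add]
      simp only [id, Matrix.submatrix_apply, U₂]
      rw [add_eq_left]
      refine Finset.sum_eq_zero fun k _ => ?_
      rw [hU _ _ (by rw [Fin.lt_def]; simp; omega), mul_zero]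
    have := det_two_columns U₂ (fun i j hij => hU _ _ (by exact hij))
      ((Z * S).submatrix id (Fin.castAdd q)) hμ
    rw [← hmat] at this
    exact this
  have horb : ∀ k : ℕ, pl (S.submatrix id α₀) ((v₀ * B ^ k).map Complex.ofReal)
        = (p * μ) ^ k * pl (S.submatrix id α₀) (v₀.map Complex.ofReal) ∧
      pl (S.submatrix id α₁) ((v₀ * B ^ k).map Complex.ofReal)
        = (p * μ) ^ k * (pl (S.submatrix id α₁) (v₀.map Complex.ofReal)
          + k * (c / μ) * pl (S.submatrix id α₀) (v₀.map Complex.ofReal)) := by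
    intro k
    simp only [map_ofReal_orbit]
    induction k with
    | zero => simp
    | succ k ih =>
      rw [pow_succ, ← Matrix.mul_assoc]
      obtain ⟨h1, h2⟩ := hstep (v₀.map Complex.ofReal * B.map Complex.ofReal ^ k)
      rw [h1, h2, ih.1, ih.2]
      refine ⟨by ring, ?_⟩
      push_cast
      field_simp
      ring
  have hom : ∀ g : Matrix (Fin (m + 1)) (Fin (m + 1)) ℝ, g.det ≠ 0 → ∃ χ : ℂ, χ ≠ 0 ∧
      ∀ Ψ : Matrix (Fin (m + 2 + q)) (Fin (m + 1)) ℂ, ∀ Z,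
      pl Ψ (g.map Complex.ofReal * Z) = χ * pl Ψ Z := by
    intro g hg
    have hdet : (g.map Complex.ofReal).det = (g.det : ℂ) := (Complex.ofRealHom.map_det g).symm
    exact ⟨g.det, by exact_mod_cast hg, fun Ψ Z => by rw [pl_mul_left, hdet]⟩
  have hE : ∀ α β : Fin (m + 1) → Fin (m + 2 + q),
      pl (S.submatrix id β) ((1 : Matrix (Fin (m + 2 + q)) (Fin (m + 2 + q)) ℂ).submatrix α id * R)
        = ((1 : Matrix (Fin (m + 2 + q)) (Fin (m + 2 + q)) ℂ).submatrix α β).det := by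
    intro α β
    have : (1 : Matrix (Fin (m + 2 + q)) (Fin (m + 2 + q)) ℂ).submatrix α id * R
        * S.submatrix id β
        = ((1 : Matrix (Fin (m + 2 + q)) (Fin (m + 2 + q)) ℂ).submatrix α id * (R * S)).submatrix
          id β := by
      rw [← Matrix.mul_assoc]; rfl
    rw [pl, this, hRS, Matrix.mul_one]
    rfl
  have hone : ∀ α : Fin (m + 1) → Fin (m + 2 + q), Function.Injective α →
      ((1 : Matrix (Fin (m + 2 + q)) (Fin (m + 2 + q)) ℂ).submatrix α α).det = 1 := by
    intro α hα
    rw [Matrix.submatrix_one _ hα, Matrix.det_one]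
  have hα₀ : Function.Injective α₀ :=
    (Fin.castAdd_injective _ _).comp (Fin.castSucc_injective _)
  have hα₁ : Function.Injective α₁ :=
    (Fin.castAdd_injective _ _).comp Fin.succAbove_right_injective
  have hQne : ∃ Z, pl (S.submatrix id α₀) Z ≠ 0 :=
    ⟨_, by rw [hE α₀ α₀, hone _ hα₀]; exact one_ne_zero⟩
  have hQ0 : pl (S.submatrix id α₀) (v₀.map Complex.ofReal) ≠ 0 := by
    obtain ⟨k, hk⟩ := exists_orbit_ne_zero hD (pl_continuous _) (pl_lineEntire _) (fun g hg => by
      obtain ⟨χ, hχ, h⟩ := hom g hg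
      exact ⟨χ, hχ, h _⟩) (fun v => linearIndependent_of_pl _) hQne
    rw [(horb k).1] at hk
    exact right_ne_zero_of_mul hk
  obtain ⟨a, ha⟩ := core hD (pl_continuous (S.submatrix id α₁)) (pl_continuous _)
    (pl_lineEntire _) (pl_lineEntire (S.submatrix id α₀)) (fun g hg => by
      obtain ⟨χ, hχ, h⟩ := hom g hg
      exact ⟨χ, hχ, fun Z => ⟨h _ Z, h _ Z⟩⟩) (fun v => linearIndependent_of_pl _) hQne
    (fun k => pl (S.submatrix id α₁) (v₀.map Complex.ofReal)
      / pl (S.submatrix id α₀) (v₀.map Complex.ofReal) + k * (c / μ))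
    (countable_closure_arith _ _) (fun k => by
      rw [(horb k).1, (horb k).2]
      field_simp)
  -- evaluate at the span of the dual basis rows with indices `0, …, m - 1, m + 1`
  have h1 := ha ((1 : Matrix (Fin (m + 2 + q)) (Fin (m + 2 + q)) ℂ).submatrix α₁ id * R)
  rw [hE, hE, hone _ hα₁, Matrix.det_eq_zero_of_row_eq_zero (Fin.last m), mul_zero] at h1
  · exact one_ne_zero h1
  · intro j
    rw [Matrix.submatrix_apply, Matrix.one_apply_ne]
    intro h
    have := congrArg Fin.val h
    simp [α₁, α₀, Fin.succAbove] at this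
    omega

/-! ### Distinct eigenvalues -/

lemma three_le_choose {N n : ℕ} (hN : 3 ≤ N) (hn : 1 ≤ n) (hnN : n < N) : 3 ≤ N.choose n := by
  induction N, hN using Nat.le_induction generalizing n with
  | base => interval_cases n <;> decide
  | succ N hN ih =>
    obtain ⟨n, rfl⟩ : ∃ k, n = k + 1 := ⟨n - 1, by omega⟩
    rw [Nat.choose_succ_succ]
    by_cases h : n + 1 < N
    · exact (ih hn h).trans (Nat.le_add_left _ _)
    · obtain rfl : n + 1 = N := by omega
      rw [Nat.choose_self, Nat.choose_succ_self_right]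
      omega

/-- A subspace contained in neither of two subspaces has a vector outside both. -/
lemma exists_mem_notMem_notMem {K V : Type*} [Field K] [AddCommGroup V] [Module K V]
    {W W₁ W₂ : Submodule K V} (h₁ : ¬ W ≤ W₁) (h₂ : ¬ W ≤ W₂) :
    ∃ z ∈ W, z ∉ W₁ ∧ z ∉ W₂ := by
  obtain ⟨x, hx, hx₁⟩ := SetLike.not_le_iff_exists.1 h₁
  obtain ⟨y, hy, hy₂⟩ := SetLike.not_le_iff_exists.1 h₂
  by_cases hx₂ : x ∈ W₂
  · by_cases hy₁ : y ∈ W₁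
    · refine ⟨x + y, W.add_mem hx hy, fun h => hx₁ ?_, fun h => hy₂ ?_⟩
      · simpa using W₁.sub_mem h hy₁
      · simpa using W₂.sub_mem h hx₂
    · exact ⟨y, hy, hy₁, hy₂⟩
  · exact ⟨x, hx, hx₁, hx₂⟩

lemma finrank_ker_vecMul {N n : ℕ} {Ψ : Matrix (Fin N) (Fin n) ℂ} {L : Matrix (Fin n) (Fin N) ℂ}
    (h : L * Ψ = 1) : Module.finrank ℂ (LinearMap.ker Ψ.vecMulLinear) + n = N := by
  have hs : LinearMap.range Ψ.vecMulLinear = ⊤ := by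
    rw [LinearMap.range_eq_top]
    intro y
    refine ⟨y ᵥ* L, ?_⟩
    rw [Matrix.vecMulLinear_apply, Matrix.vecMul_vecMul, h, Matrix.vecMul_one]
  have := LinearMap.finrank_range_add_finrank_ker Ψ.vecMulLinear
  rw [hs, finrank_top] at this
  simpa [add_comm] using this

/-- A diagonalizable `B` with nonzero eigenvalues has no dense orbit when `N ≥ 3`. For an `n`-set
`A` of eigenvectors, `W A` is the common annihilator of dimension `N - n`; among three different
`n`-sets `A₁, A₂, A₃` one of `W A₂`, `W A₃` differs from the conjugate of `W A₁`. -/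
lemma not_denseOrb_of_diagonal {N n : ℕ} (hN : 3 ≤ N) (hn : 1 ≤ n) (hnN : n < N)
    {B : Matrix (Fin N) (Fin N) ℝ} {v₀ : Matrix (Fin n) (Fin N) ℝ} (hD : DenseOrb B v₀)
    {S R : Matrix (Fin N) (Fin N) ℂ} {μ : Fin N → ℂ} (hRS : R * S = 1)
    (hBS : B.map Complex.ofReal * S = S * Matrix.diagonal μ) (hμ : ∀ i, μ i ≠ 0) : False := by
  have hcard : 2 < (Finset.powersetCard n (Finset.univ : Finset (Fin N))).card := by
    rw [Finset.card_powersetCard, Finset.card_univ, Fintype.card_fin]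
    exact three_le_choose hN hn hnN
  obtain ⟨A₁, h₁, A₂, h₂, A₃, h₃, h₁₂, h₁₃, h₂₃⟩ := Finset.two_lt_card.1 hcard
  simp only [Finset.mem_powersetCard, Finset.subset_univ, true_and] at h₁ h₂ h₃
  let Ψ : ∀ A : Finset (Fin N), A.card = n → Matrix (Fin N) (Fin n) ℂ := fun A hA =>
    S.submatrix id (A.orderEmbOfFin hA)
  let L : ∀ A : Finset (Fin N), A.card = n → Matrix (Fin n) (Fin N) ℂ := fun A hA =>
    R.submatrix (A.orderEmbOfFin hA) id
  let W : ∀ A : Finset (Fin N), A.card = n → Submodule ℂ (Fin N → ℂ) := fun A hA =>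
    LinearMap.ker (Ψ A hA).vecMulLinear
  have hL : ∀ A hA, L A hA * Ψ A hA = 1 := by
    intro A hA
    have : L A hA * Ψ A hA
        = (R * S).submatrix (A.orderEmbOfFin hA) (A.orderEmbOfFin hA) := rfl
    rw [this, hRS, Matrix.submatrix_one _ (A.orderEmbOfFin hA).injective]
  have hU : ∀ A hA, B.map Complex.ofReal * Ψ A hA
      = Ψ A hA * Matrix.diagonal (μ ∘ A.orderEmbOfFin hA) := by
    intro A hA
    have : B.map Complex.ofReal * Ψ A hA
        = (B.map Complex.ofReal * S).submatrix id (A.orderEmbOfFin hA) := rfl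
    rw [this, hBS]
    ext i j
    simp [Ψ]
  -- the rows of `R` are the basis dual to the eigenvectors
  have hrow : ∀ (j : Fin N) A hA, R j ∈ W A hA ↔ j ∉ A := by
    intro j A hA
    have : R j ᵥ* Ψ A hA = fun i => (1 : Matrix (Fin N) (Fin N) ℂ) j (A.orderEmbOfFin hA i) := by
      rw [← hRS]; rfl
    rw [LinearMap.mem_ker, Matrix.vecMulLinear_apply, this]
    constructor
    · intro h hj
      obtain ⟨i, rfl⟩ : j ∈ Set.range (A.orderEmbOfFin hA) := by simpa using hj
      simpa using congrFun h i
    · intro hj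
      ext i
      exact Matrix.one_apply_ne fun h => hj (h ▸ A.orderEmbOfFin_mem hA i)
  have hWle : ∀ A hA A' hA', A ≠ A' → ¬ W A hA ≤ W A' hA' := by
    intro A hA A' hA' hne hle
    refine hne (Finset.eq_of_subset_of_card_le (fun j hj => ?_) (hA.trans hA'.symm).le).symm
    by_contra hj'
    exact (hrow j A' hA').1 (hle ((hrow j A hA).2 hj')) hj
  have hrank : ∀ A hA, Module.finrank ℂ (W A hA) + n = N := fun A hA =>
    finrank_ker_vecMul (hL A hA)
  let C : Submodule ℂ (Fin N → ℂ) :=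
    LinearMap.ker ((Ψ A₁ h₁).map (starRingEnd ℂ)).vecMulLinear
  have hC : Module.finrank ℂ C + n = N := by
    refine finrank_ker_vecMul (L := (L A₁ h₁).map (starRingEnd ℂ)) ?_
    rw [← Matrix.map_mul, hL]
    simp
  have key : ∀ A hA, A₁ ≠ A → ¬ W A hA ≤ C → False := by
    intro A hA hne hle
    obtain ⟨z, hz, hz₁, hz₁'⟩ := exists_mem_notMem_notMem (hWle A hA A₁ h₁ hne.symm) hle
    refine not_denseOrb_of_two hn hD (hL A₁ h₁) (hL A hA) (hU A₁ h₁) (hU A hA) ?_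
      (z := z) hz hz₁ hz₁'
    rw [Matrix.det_diagonal]
    exact Finset.prod_ne_zero_iff.2 fun i _ => hμ _
  -- `W A₂` and `W A₃` are distinct of the same dimension, so not both equal the conjugate of `W A₁`
  by_cases h : W A₂ h₂ ≤ C
  · refine key A₃ h₃ h₁₃ fun h' => hWle A₂ h₂ A₃ h₃ h₂₃ ?_
    have := hrank A₂ h₂
    have := hrank A₃ h₃
    rw [Submodule.eq_of_le_of_finrank_eq h (by omega),
      Submodule.eq_of_le_of_finrank_eq h' (by omega)]
  · exact key A₂ h₂ h₁₂ h

/-! ### No dense orbits -/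

/-- No real square matrix of size at least `3` has a dense orbit on the frames of a fixed
intermediate size. -/
lemma not_denseOrb {N n : ℕ} (hN : 3 ≤ N) (hn : 1 ≤ n) (hnN : n < N)
    {B : Matrix (Fin N) (Fin N) ℝ} {v₀ : Matrix (Fin n) (Fin N) ℝ} : ¬ DenseOrb B v₀ := by
  intro hD
  have hdet := det_ne_zero_of_denseOrb hn hnN hD
  have hdetC : (B.map Complex.ofReal).det ≠ 0 := by
    have : (B.map Complex.ofReal).det = (B.det : ℂ) := (Complex.ofRealHom.map_det B).symm
    rw [this]
    exact_mod_cast hdet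
  obtain ⟨μ, hμ⟩ := exists_charpoly_eq_prod (B.map Complex.ofReal)
  have hμ0 : ∀ i, μ i ≠ 0 := by
    intro i hi
    apply hdetC
    rw [Matrix.det_eq_sign_charpoly_coeff, Polynomial.coeff_zero_eq_eval_zero, hμ,
      Polynomial.eval_prod, Finset.prod_eq_zero (Finset.mem_univ i) (by simp [hi]), mul_zero]
  by_cases hinj : Function.Injective μ
  · obtain ⟨S, R, hRS, hBS⟩ := exists_diagonal _ μ hμ hinj
    exact not_denseOrb_of_diagonal hN hn hnN hD hRS hBS hμ0
  · simp only [Function.Injective, not_forall] at hinj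
    obtain ⟨i, j, hij, hne⟩ := hinj
    obtain ⟨m, rfl⟩ : ∃ m, n = m + 1 := ⟨n - 1, by omega⟩
    obtain ⟨q, rfl⟩ : ∃ q, N = m + 2 + q := ⟨N - (m + 2), by omega⟩
    set a := Fin.castAdd q (Fin.last m).castSucc with ha
    set b := Fin.castAdd q (Fin.last (m + 1)) with hb
    have hab : a ≠ b := by
      rw [ha, hb, Ne, Fin.ext_iff]
      simp
    -- reorder the eigenvalues so that the two equal ones sit at the places `a = m` and `b = m + 1`
    obtain ⟨π, hπa, hπb⟩ : ∃ π : Equiv.Perm (Fin (m + 2 + q)), π a = i ∧ π b = j := by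
      have hib : Equiv.swap a i j ≠ a := by
        rw [Ne, Equiv.swap_apply_eq_iff, Equiv.swap_apply_left]
        exact fun h => hne h.symm
      refine ⟨Equiv.swap a i * Equiv.swap b (Equiv.swap a i j), ?_, ?_⟩
      · rw [Equiv.Perm.mul_apply, Equiv.swap_apply_of_ne_of_ne hab hib.symm,
          Equiv.swap_apply_left]
      · rw [Equiv.Perm.mul_apply, Equiv.swap_apply_left, Equiv.swap_apply_self]
    obtain ⟨S, R, U, hRS, hBS, hU, hUd⟩ := exists_triangular _ _ (μ ∘ π)
      (hμ.trans (Equiv.prod_comp π fun i => Polynomial.X - Polynomial.C (μ i)).symm)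
    refine not_denseOrb_of_repeated hD hRS hBS hU (fun i => ?_) ?_
    · rw [hUd]; exact hμ0 _
    · rw [hUd, hUd, Function.comp_apply, Function.comp_apply, ← ha, ← hb, hπa, hπb, hij]

/-! ### A rotation of three-space -/

/-- The rotation of `ℝ³` by `1` radian about the third coordinate axis. -/
noncomputable def rot : (Fin 3 → ℝ) →ₗ[ℝ] (Fin 3 → ℝ) :=
  Matrix.toLin' !![Real.cos 1, -Real.sin 1, 0; Real.sin 1, Real.cos 1, 0; 0, 0, 1]

lemma rot_apply (ρ t z : ℝ) : rot ![ρ * Real.cos t, ρ * Real.sin t, z]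
    = ![ρ * Real.cos (t + 1), ρ * Real.sin (t + 1), z] := by
  ext i
  fin_cases i <;> simp [rot, Matrix.mulVec, dotProduct, Fin.sum_univ_three, Real.cos_add,
    Real.sin_add] <;> ring

lemma rot_pow_apply (ρ z : ℝ) (k : ℕ) : (rot ^ k) ![ρ, 0, z]
    = ![ρ * Real.cos k, ρ * Real.sin k, z] := by
  induction k with
  | zero => simp
  | succ k ih =>
    rw [pow_succ', Module.End.mul_apply, ih, rot_apply]
    push_cast
    rfl

/-- The plane `{x | x 1 = 0}` contains the axis and hence meets every circle about it. -/
lemma nSupercyclic_rot : NSupercyclic 2 rot := by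
  refine ⟨LinearMap.ker (LinearMap.proj (R := ℝ) (φ := fun _ : Fin 3 => ℝ) 1), ?_, ?_⟩
  · have := LinearMap.finrank_range_add_finrank_ker
      (LinearMap.proj (R := ℝ) (φ := fun _ : Fin 3 => ℝ) 1)
    rw [LinearMap.range_eq_top.2 (LinearMap.proj_surjective 1), finrank_top] at this
    simp at this
    omega
  · have : Fact (0 < 2 * Real.pi) := ⟨Real.two_pi_pos⟩
    have hd : DenseRange fun k : ℕ => k • ((1 : ℝ) : AddCircle (2 * Real.pi)) := by
      rw [← denseRange_zsmul_iff_nsmul, AddCircle.denseRange_zsmul_coe_iff]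
      rw [one_div, irrational_inv_iff]
      exact_mod_cast irrational_pi.natCast_mul two_ne_zero
    rw [dense_iff_closure_eq, Set.eq_univ_iff_forall]
    intro x
    obtain ⟨ρ, t, h0, h1⟩ : ∃ ρ t, x 0 = ρ * Real.cos t ∧ x 1 = ρ * Real.sin t := by
      refine ⟨‖(⟨x 0, x 1⟩ : ℂ)‖, Complex.arg ⟨x 0, x 1⟩, ?_, ?_⟩
      · rw [Complex.norm_mul_cos_arg]
      · rw [Complex.norm_mul_sin_arg]
    -- the circle through `x` about the axis is a continuous image of `ℝ / 2πℤ`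
    let f : AddCircle (2 * Real.pi) → Fin 3 → ℝ := fun s =>
      ![ρ * Real.cos_periodic.lift s, ρ * Real.sin_periodic.lift s, x 2]
    have hf : Continuous f := by
      have hcos : Continuous (Real.cos_periodic.lift) :=
        continuous_quot_lift _ Real.continuous_cos
      have hsin : Continuous (Real.sin_periodic.lift) :=
        continuous_quot_lift _ Real.continuous_sin
      refine continuous_pi fun i => ?_
      fin_cases i
      · exact continuous_const.mul hcos
      · exact continuous_const.mul hsin
      · exact continuous_const
    have hx : x = f (t : AddCircle (2 * Real.pi)) := by
      ext i
      fin_cases i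
      · exact h0
      · exact h1
      · rfl
    rw [hx]
    refine closure_mono ?_ (hf.range_subset_closure_image_dense hd ⟨_, rfl⟩)
    rintro _ ⟨_, ⟨k, rfl⟩, rfl⟩
    refine Set.mem_iUnion.2 ⟨k, ![ρ, 0, x 2], by simp, ?_⟩
    rw [rot_pow_apply]
    have : k • ((1 : ℝ) : AddCircle (2 * Real.pi)) = ((k : ℝ) : AddCircle (2 * Real.pi)) := by
      rw [← AddCircle.coe_nsmul]; simp
    simp only [this]
    rfl

theorem stmt19 :
    (∀ N : ℕ, 3 ≤ N → ∀ n : ℕ, 1 ≤ n → n < N →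
      ∀ T : (Fin N → ℝ) →ₗ[ℝ] (Fin N → ℝ), ¬ StronglyNSupercyclic n T) ∧
    (∃ T : (Fin 3 → ℝ) →ₗ[ℝ] (Fin 3 → ℝ),
      NSupercyclic 2 T ∧ ¬ StronglyNSupercyclic 2 T) := by
  have main : ∀ N : ℕ, 3 ≤ N → ∀ n : ℕ, 1 ≤ n → n < N →
      ∀ T : (Fin N → ℝ) →ₗ[ℝ] (Fin N → ℝ), ¬ StronglyNSupercyclic n T := by
    rintro N hN n hn hnN T ⟨M, hM⟩
    obtain ⟨v₀, hD⟩ := denseOrb_of_SCSubspace hM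
    exact not_denseOrb hN hn hnN hD
  exact ⟨main, rot, nSupercyclic_rot, main 3 le_rfl 2 one_le_two (by norm_num) rot⟩
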